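/- Let ψ : ℝ³ → (0,∞) be smooth, radial, with ‖ψ‖_{L²} = 1, and suppose ψ together with all its partial derivatives up to second order is bounded by C₀ e^{−|x|/C₀} for some C₀ > 0. Define φ(z) := ∫_{ℝ³} ψ(x)² / (2π²|z−x|²) dx, H(y) := ∫_{ℝ³} ψ(x)ψ(x+y) dx, l_y(z) := H(y) φ(z) − ∫_{ℝ³} ψ(x)ψ(x+y) / (2π²|x−z|²) dx, and w_{0,y} := φ − τ_y φ with (τ_y f)(z) = f(z−y). Let Π₀ be the orthogonal projection in L²(ℝ³;ℂ) onto span{∂₁φ, ∂₂φ, ∂₃φ} and Π₁ := 1 − Π₀. Then there is a constant C > 0 such that for all y ∈ ℝ³: ‖ w_{0,y} − (y·∇)φ ‖_{L²} + ‖ Π₁ l_y ‖_{L²} + ‖ Π₀ l_y + (1/2)(y·∇)φ ‖_{L²} ≤ C |y|². -/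

import Mathlib

open MeasureTheory Real Complex
open scoped ComplexConjugate

noncomputable section

/-!
The field `φ` is the Riesz potential `(-Δ)^{-1/2} ψ²`, so increments of `φ` and `l_y` are
potentials of densities built from `ψ`. Taylor expanding these densities leaves errors of size
`|y|²` times an exponential weight, and the potential of such a weight decays like `|z|⁻²`, hence
lies in `L²(ℝ³)`. This settles `w_{0,y} - (y·∇)φ`. For `l_y`, polarization gives
`H(y) = 1 - ½‖ψ - τ_{-y}ψ‖²`, so the zeroth order terms cancel up to `O(|y|²)`, and
`ψ∂_yψ = ½ ∂_y(ψ²)` yields `‖l_y + ½(y·∇)φ‖ = O(|y|²)`. As `(y·∇)φ` lies in the range of `Π₀`,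
Pythagoras splits this bound into those on `Π₁ l_y` and `Π₀ l_y + ½(y·∇)φ`.
-/

section DecayingFunctions

variable {E F : Type*} [NormedAddCommGroup E] [NormedAddCommGroup F]

/-- The exponential weight `e^{-|x|/c}` with decay length `c`. -/
def expWeight (c : ℝ) (x : E) : ℝ := Real.exp (-‖x‖ / c)

/-- `f` decays exponentially: it is dominated by `A e^{-|x|/c}`. Both constants are recorded, so
that bounds can be tracked uniformly in parameters. -/
def ExpDecay (A c : ℝ) (f : E → F) : Prop := ∀ x, ‖f x‖ ≤ A * expWeight c x

variable {A B c : ℝ}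

lemma expWeight_pos (c : ℝ) (x : E) : 0 < expWeight c x := Real.exp_pos _

lemma continuous_expWeight (c : ℝ) : Continuous (expWeight c : E → ℝ) := by
  unfold expWeight
  fun_prop

lemma expWeight_le_one (hc : 0 < c) (x : E) : expWeight c x ≤ 1 :=
  Real.exp_le_one_iff.2 (div_nonpos_of_nonpos_of_nonneg (by simp) hc.le)

lemma expWeight_sq_le (hc : 0 < c) (x : E) : expWeight c x ^ 2 ≤ expWeight c x :=
  pow_le_of_le_one (expWeight_pos c x).le (expWeight_le_one hc x) two_ne_zero

lemma expWeight_two_mul_sq (c : ℝ) (x : E) : expWeight (2 * c) x ^ 2 = expWeight c x := by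
  unfold expWeight
  rw [← Real.exp_nat_mul]
  congr 1
  field

lemma expWeight_le_exp_mul_expWeight (hc : 0 < c) (x y : E) :
    expWeight c x ≤ Real.exp (‖x - y‖ / c) * expWeight c y := by
  unfold expWeight
  rw [← Real.exp_add, ← add_div]
  gcongr
  linarith [norm_sub_norm_le y x, norm_sub_rev x y]

lemma one_add_norm_pow_mul_expWeight_le (hc : 0 < c) (n : ℕ) (x : E) :
    (1 + ‖x‖) ^ n * expWeight c x ≤ n.factorial * c ^ n * Real.exp (1 / c) := by
  have h := Real.pow_div_factorial_le_exp ((1 + ‖x‖) / c) (by positivity) n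
  rw [div_pow, div_div, div_le_iff₀ (by positivity)] at h
  calc (1 + ‖x‖) ^ n * expWeight c x
      ≤ Real.exp ((1 + ‖x‖) / c) * (c ^ n * n.factorial) * expWeight c x := by
        gcongr
        exact (expWeight_pos c x).le
    _ = n.factorial * c ^ n * Real.exp (1 / c) := by
        rw [add_div, Real.exp_add, expWeight, neg_div, Real.exp_neg]
        field

namespace ExpDecay

lemma nonneg {f : E → F} (hf : ExpDecay A c f) : 0 ≤ A := by
  simpa [expWeight] using (norm_nonneg _).trans (hf 0)

lemma norm_le {f : E → F} (hf : ExpDecay A c f) (hc : 0 < c) (x : E) : ‖f x‖ ≤ A :=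
  (hf x).trans (mul_le_of_le_one_right hf.nonneg (expWeight_le_one hc x))

lemma smul [NormedSpace ℝ F] {f : E → ℝ} {g : E → F} (hf : ExpDecay A c f)
    (hg : ∀ x, ‖g x‖ ≤ B) : ExpDecay (A * B) c fun x => f x • g x := fun x => by
  calc ‖f x • g x‖ = ‖f x‖ * ‖g x‖ := norm_smul _ _
    _ ≤ A * expWeight c x * B :=
        mul_le_mul (hf x) (hg x) (norm_nonneg _) ((norm_nonneg _).trans (hf x))
    _ = A * B * expWeight c x := by ring

lemma const_mul {f : E → ℝ} (hf : ExpDecay A c f) (a : ℝ) :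
    ExpDecay (|a| * A) c fun x => a * f x := fun x => by
  rw [norm_mul, Real.norm_eq_abs, mul_assoc]
  exact mul_le_mul_of_nonneg_left (hf x) (abs_nonneg a)

variable [NormedSpace ℝ E] [NormedSpace ℝ F]

lemma clm_apply {f : E → E →L[ℝ] F} (hf : ExpDecay A c f) (y : E) :
    ExpDecay (A * ‖y‖) c fun x => f x y := fun x => by
  calc ‖f x y‖ ≤ A * expWeight c x * ‖y‖ := (f x).le_of_opNorm_le (hf x) y
    _ = A * ‖y‖ * expWeight c x := by ring

/-- For `|y| ≤ 1` this is the mean value inequality, the weight varying by at most `e^{1/c}` along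
the segment; for `|y| ≥ 1` the triangle inequality suffices. -/
lemma norm_add_sub_le {f : E → F} (hc : 0 < c) (hf : Differentiable ℝ f) (h₀ : ExpDecay A c f)
    (h₁ : ExpDecay A c (fderiv ℝ f)) (x y : E) :
    ‖f (x + y) - f x‖ ≤
      A * Real.exp (1 / c) * ‖y‖ * (expWeight c x + expWeight c (x + y)) := by
  have hA := h₀.nonneg
  have hx := expWeight_pos c x
  have hxy := expWeight_pos c (x + y)
  rcases le_total ‖y‖ 1 with hy | hy
  · have hderiv : ∀ v ∈ Metric.closedBall x ‖y‖,
        ‖fderiv ℝ f v‖ ≤ A * Real.exp (1 / c) * expWeight c x := fun v hv => by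
      have hvx : ‖v - x‖ ≤ 1 := (mem_closedBall_iff_norm.1 hv).trans hy
      calc ‖fderiv ℝ f v‖ ≤ A * expWeight c v := h₁ v
        _ ≤ A * (Real.exp (‖v - x‖ / c) * expWeight c x) := by
          gcongr
          exact expWeight_le_exp_mul_expWeight hc v x
        _ ≤ A * Real.exp (1 / c) * expWeight c x := by
          rw [mul_assoc]
          gcongr
    have hmv := (convex_closedBall x ‖y‖).norm_image_sub_le_of_norm_fderiv_le
      (fun v _ => hf v) hderiv (Metric.mem_closedBall_self (norm_nonneg y))
      (show x + y ∈ _ by simp)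
    rw [add_sub_cancel_left] at hmv
    calc ‖f (x + y) - f x‖ ≤ A * Real.exp (1 / c) * ‖y‖ * expWeight c x := by linarith
      _ ≤ _ := by
        gcongr
        linarith
  · have hexp : 1 ≤ Real.exp (1 / c) := Real.one_le_exp (by positivity)
    calc ‖f (x + y) - f x‖ ≤ ‖f (x + y)‖ + ‖f x‖ := norm_sub_le _ _
      _ ≤ A * expWeight c (x + y) + A * expWeight c x := add_le_add (h₀ _) (h₀ _)
      _ = A * 1 * 1 * (expWeight c x + expWeight c (x + y)) := by ring
      _ ≤ _ := by gcongr

lemma norm_add_sub_sq_le {f : E → F} (hc : 0 < c) (hf : Differentiable ℝ f)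
    (h₀ : ExpDecay A c f) (h₁ : ExpDecay A c (fderiv ℝ f)) (x y : E) :
    ‖f (x + y) - f x‖ ^ 2 ≤
      2 * (A * Real.exp (1 / c) * ‖y‖) ^ 2 * (expWeight c x + expWeight c (x + y)) := by
  have hsum : (expWeight c x + expWeight c (x + y)) ^ 2 ≤
      2 * (expWeight c x + expWeight c (x + y)) := by
    linarith [add_sq_le (a := expWeight c x) (b := expWeight c (x + y)), expWeight_sq_le hc x,
      expWeight_sq_le hc (x + y)]
  calc ‖f (x + y) - f x‖ ^ 2
      ≤ (A * Real.exp (1 / c) * ‖y‖ * (expWeight c x + expWeight c (x + y))) ^ 2 := by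
        gcongr
        exact norm_add_sub_le hc hf h₀ h₁ x y
    _ = (A * Real.exp (1 / c) * ‖y‖) ^ 2 * (expWeight c x + expWeight c (x + y)) ^ 2 := by ring
    _ ≤ (A * Real.exp (1 / c) * ‖y‖) ^ 2 * (2 * (expWeight c x + expWeight c (x + y))) := by
        gcongr
    _ = _ := by ring

end ExpDecay

lemma norm_add_sub_sub_fderiv_le [NormedSpace ℝ E] [NormedSpace ℝ F] {f : E → F} {C : ℝ}
    (hf : Differentiable ℝ f) (hf' : Differentiable ℝ (fderiv ℝ f))
    (hC : ∀ x, ‖fderiv ℝ (fderiv ℝ f) x‖ ≤ C) (x y : E) :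
    ‖f (x + y) - f x - fderiv ℝ f x y‖ ≤ C * ‖y‖ ^ 2 := by
  have hC₀ : 0 ≤ C := (norm_nonneg (fderiv ℝ (fderiv ℝ f) x)).trans (hC x)
  have hlip : ∀ v ∈ Metric.closedBall x ‖y‖, ‖fderiv ℝ f v - fderiv ℝ f x‖ ≤ C * ‖y‖ :=
    fun v hv => (convex_univ.norm_image_sub_le_of_norm_fderiv_le (fun u _ => hf' u)
      (fun u _ => hC u) (Set.mem_univ x) (Set.mem_univ v)).trans
        (mul_le_mul_of_nonneg_left (mem_closedBall_iff_norm.1 hv) hC₀)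
  have hmv := (convex_closedBall x ‖y‖).norm_image_sub_le_of_norm_fderiv_le'
    (fun v _ => hf v) hlip (Metric.mem_closedBall_self (norm_nonneg y))
    (show x + y ∈ _ by simp)
  rwa [add_sub_cancel_left, mul_assoc, ← sq] at hmv

end DecayingFunctions

section RieszPotential

open Module

variable {E F : Type*} [NormedAddCommGroup E] [NormedAddCommGroup F] [NormedSpace ℝ F]

/-- The kernel `1 / (2π²|u|²)`, which on `ℝ³` is the convolution kernel of `(-Δ)^{-1/2}`; it takes
the junk value `0` at `u = 0`. -/
def rieszKernel (u : E) : ℝ := (2 * π ^ 2 * ‖u‖ ^ 2)⁻¹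

/-- The convolution of `f` with `1 / (2π²|·|²)`, which on `ℝ³` is the Riesz potential
`(-Δ)^{-1/2} f`. -/
def rieszPotential [MeasurableSpace E] (μ : Measure E) (f : E → F) (z : E) : F :=
  ∫ x, rieszKernel (z - x) • f x ∂μ

lemma rieszKernel_nonneg (u : E) : 0 ≤ rieszKernel u := by
  unfold rieszKernel
  positivity

lemma rieszKernel_mul_norm_sq_le (u : E) : rieszKernel u * ‖u‖ ^ 2 ≤ 1 / 2 := by
  rcases eq_or_ne ‖u‖ 0 with hu | hu
  · simp [hu]
  · have hπ : 1 ≤ π ^ 2 := one_le_pow₀ (by linarith [Real.pi_gt_three])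
    unfold rieszKernel
    field_simp
    exact hπ

lemma rieszKernel_le_indicator_add_one (u : E) :
    rieszKernel u ≤ (Metric.ball 0 1).indicator rieszKernel u + 1 := by
  by_cases hu : u ∈ Metric.ball (0 : E) 1
  · simp [hu]
  · have hu₁ : 1 ≤ ‖u‖ ^ 2 := one_le_pow₀ (by simpa using hu)
    rw [Set.indicator_of_notMem hu, zero_add]
    nlinarith [rieszKernel_mul_norm_sq_le u, rieszKernel_nonneg u]

lemma rieszKernel_mul_expWeight_le {c : ℝ} (hc : 0 < c) (z x : E) :
    rieszKernel (z - x) * expWeight c x ≤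
      (Metric.ball 0 1).indicator rieszKernel (z - x) + expWeight c x := by
  have hnonneg : 0 ≤ (Metric.ball 0 1).indicator rieszKernel (z - x) :=
    Set.indicator_nonneg (fun u _ => rieszKernel_nonneg u) _
  nlinarith [rieszKernel_le_indicator_add_one (z - x), expWeight_pos c x, expWeight_le_one hc x]

/-- Half of the exponential weight absorbs the growth of `(1 + |x|)²`. -/
lemma exists_one_add_norm_sq_mul_rieszKernel_mul_expWeight_le {c : ℝ} (hc : 0 < c) :
    ∃ M ≥ 0, ∀ z x : E, (1 + ‖z‖) ^ 2 * (rieszKernel (z - x) * expWeight c x) ≤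
      expWeight c x + M * (rieszKernel (z - x) * expWeight (2 * c) x) := by
  refine ⟨2 * ((2 : ℕ).factorial * (2 * c) ^ 2 * Real.exp (1 / (2 * c))), by positivity,
    fun z x => ?_⟩
  set M := (2 : ℕ).factorial * (2 * c) ^ 2 * Real.exp (1 / (2 * c))
  have hk := rieszKernel_nonneg (z - x)
  have hw := expWeight_pos c x
  have hz : (1 + ‖z‖) ^ 2 ≤ 2 * ‖z - x‖ ^ 2 + 2 * (1 + ‖x‖) ^ 2 := by
    have htri : 1 + ‖z‖ ≤ ‖z - x‖ + (1 + ‖x‖) := by linarith [norm_sub_norm_le z x]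
    calc (1 + ‖z‖) ^ 2 ≤ (‖z - x‖ + (1 + ‖x‖)) ^ 2 := by gcongr
      _ ≤ _ := by linarith [add_sq_le (a := ‖z - x‖) (b := 1 + ‖x‖)]
  have hpoly : (1 + ‖x‖) ^ 2 * expWeight c x ≤ M * expWeight (2 * c) x := by
    rw [← expWeight_two_mul_sq, sq (expWeight _ x), ← mul_assoc]
    gcongr
    · exact (expWeight_pos _ x).le
    · exact one_add_norm_pow_mul_expWeight_le (by positivity) 2 x
  calc (1 + ‖z‖) ^ 2 * (rieszKernel (z - x) * expWeight c x)
      ≤ (2 * ‖z - x‖ ^ 2 + 2 * (1 + ‖x‖) ^ 2) * (rieszKernel (z - x) * expWeight c x) := by gcongr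
    _ = 2 * (rieszKernel (z - x) * ‖z - x‖ ^ 2) * expWeight c x +
          2 * rieszKernel (z - x) * ((1 + ‖x‖) ^ 2 * expWeight c x) := by ring
    _ ≤ 2 * (1 / 2) * expWeight c x + 2 * rieszKernel (z - x) * (M * expWeight (2 * c) x) := by
        gcongr
        exact rieszKernel_mul_norm_sq_le _
    _ = _ := by ring

variable [MeasurableSpace E] {μ : Measure E}

lemma rieszPotential_eq_integral_div (f : E → ℝ) (z : E) :
    rieszPotential μ f z = ∫ x, f x / (2 * π ^ 2 * ‖z - x‖ ^ 2) ∂μ := by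
  simp only [rieszPotential, rieszKernel, smul_eq_mul, div_eq_inv_mul]

lemma norm_rieszPotential_le_of_norm_le {f : E → F} {g : E → ℝ} {z : E}
    (hg : Integrable (fun x => rieszKernel (z - x) • g x) μ) (hfg : ∀ x, ‖f x‖ ≤ g x) :
    ‖rieszPotential μ f z‖ ≤ rieszPotential μ g z :=
  norm_integral_le_of_norm_le hg <| .of_forall fun x => by
    rw [norm_smul, Real.norm_of_nonneg (rieszKernel_nonneg _)]
    exact mul_le_mul_of_nonneg_left (hfg x) (rieszKernel_nonneg _)

lemma rieszPotential_add {f g : E → F} {z : E}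
    (hf : Integrable (fun x => rieszKernel (z - x) • f x) μ)
    (hg : Integrable (fun x => rieszKernel (z - x) • g x) μ) :
    rieszPotential μ (fun x => f x + g x) z = rieszPotential μ f z + rieszPotential μ g z := by
  simp only [rieszPotential, smul_add]
  exact integral_add hf hg

lemma rieszPotential_sub {f g : E → F} {z : E}
    (hf : Integrable (fun x => rieszKernel (z - x) • f x) μ)
    (hg : Integrable (fun x => rieszKernel (z - x) • g x) μ) :
    rieszPotential μ (fun x => f x - g x) z = rieszPotential μ f z - rieszPotential μ g z := by
  simp only [rieszPotential, smul_sub]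
  exact integral_sub hf hg

lemma rieszPotential_const_mul (a : ℝ) (f : E → ℝ) (z : E) :
    rieszPotential μ (fun x => a * f x) z = a * rieszPotential μ f z := by
  simp only [rieszPotential, smul_eq_mul, mul_left_comm _ a, integral_const_mul]

lemma rieszPotential_clm_apply {G : Type*} [NormedAddCommGroup G] [NormedSpace ℝ G]
    {f : E → G →L[ℝ] F} {z : E} (hf : Integrable (fun x => rieszKernel (z - x) • f x) μ) (v : G) :
    rieszPotential μ f z v = rieszPotential μ (fun x => f x v) z :=
  ContinuousLinearMap.integral_apply hf v

lemma rieszPotential_expWeight_nonneg (c : ℝ) (z : E) :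
    0 ≤ rieszPotential μ (expWeight c) z :=
  integral_nonneg fun x => mul_nonneg (rieszKernel_nonneg _) (expWeight_pos c x).le

variable [BorelSpace E]

lemma measurable_rieszKernel : Measurable (rieszKernel : E → ℝ) := by
  unfold rieszKernel
  fun_prop

lemma rieszPotential_comp_sub_right [μ.IsAddRightInvariant] (f : E → F) (y z : E) :
    rieszPotential μ (fun x => f (x - y)) z = rieszPotential μ f (z - y) := by
  rw [rieszPotential, rieszPotential, ← integral_sub_right_eq_self (μ := μ)
    (fun x => rieszKernel (z - y - x) • f x) y]
  simp only [sub_sub_sub_cancel_right]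

variable [NormedSpace ℝ E] [FiniteDimensional ℝ E]

lemma aestronglyMeasurable_rieszPotential [SFinite μ] {f : E → F}
    (hf : AEStronglyMeasurable f μ) : AEStronglyMeasurable (rieszPotential μ f) μ :=
  ((measurable_rieszKernel.comp measurable_sub).aestronglyMeasurable.smul
    hf.comp_snd).integral_prod_right'

lemma aestronglyMeasurable_rieszKernel_smul_sub {f : E → F} (hf : Continuous f) (z : E) :
    AEStronglyMeasurable (fun x => rieszKernel x • f (z - x)) μ :=
  measurable_rieszKernel.aestronglyMeasurable.smul
    (hf.comp (continuous_const.sub continuous_id)).aestronglyMeasurable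

variable [μ.IsAddHaarMeasure] {A B c : ℝ}

lemma integrable_expWeight (hc : 0 < c) : Integrable (expWeight c : E → ℝ) μ := by
  have hdim : (finrank ℝ E : ℝ) < (finrank ℝ E + 1 : ℕ) := by exact_mod_cast Nat.lt_succ_self _
  refine ((integrable_one_add_norm hdim).const_mul
    ((finrank ℝ E + 1).factorial * c ^ (finrank ℝ E + 1) * Real.exp (1 / c))).mono'
    (continuous_expWeight c).aestronglyMeasurable <| .of_forall fun x => ?_
  rw [Real.norm_of_nonneg (expWeight_pos c x).le, Real.rpow_neg (by positivity), Real.rpow_natCast,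
    ← div_eq_mul_inv, le_div_iff₀ (by positivity), mul_comm]
  exact one_add_norm_pow_mul_expWeight_le hc _ x

lemma integrableOn_rieszKernel_ball (hE : 2 < finrank ℝ E) (r : ℝ) :
    IntegrableOn (rieszKernel : E → ℝ) (Metric.ball 0 r) μ := by
  have : Nontrivial E := nontrivial_of_finrank_pos (R := ℝ) (by lia)
  refine (integrableOn_fun_norm_addHaar μ (f := fun s : ℝ => (2 * π ^ 2 * s ^ 2)⁻¹)).2 ?_
  have hcont : Continuous fun s : ℝ => s ^ (finrank ℝ E - 3) * (2 * π ^ 2)⁻¹ := by fun_prop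
  refine (hcont.integrableOn_Icc.mono_set Set.Ioo_subset_Icc_self).congr_fun (fun s hs => ?_)
    measurableSet_Ioo
  have hs₀ : s ≠ 0 := hs.1.ne'
  have hpow : s ^ (finrank ℝ E - 1) = s ^ (finrank ℝ E - 3) * s ^ 2 := by
    rw [← pow_add]
    congr 1
    lia
  simp only [smul_eq_mul, hpow]
  field

lemma integrable_rieszKernel_indicator_sub_add_expWeight (hE : 2 < finrank ℝ E) (hc : 0 < c)
    (z : E) : Integrable (fun x =>
      (Metric.ball 0 1).indicator rieszKernel (z - x) + expWeight c x) μ :=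
  (((integrableOn_rieszKernel_ball hE 1).integrable_indicator measurableSet_ball).comp_sub_left
    z).add (integrable_expWeight hc)

lemma integrable_rieszKernel_smul_expWeight (hE : 2 < finrank ℝ E) (hc : 0 < c) (z : E) :
    Integrable (fun x => rieszKernel (z - x) • expWeight c x) μ := by
  have hmeas : Measurable fun x => rieszKernel (z - x) • expWeight c x :=
    (measurable_rieszKernel.comp (by fun_prop)).mul (continuous_expWeight c).measurable
  refine (integrable_rieszKernel_indicator_sub_add_expWeight hE hc z).mono'
    hmeas.aestronglyMeasurable <| .of_forall fun x => ?_
  rw [smul_eq_mul,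
    Real.norm_of_nonneg (mul_nonneg (rieszKernel_nonneg _) (expWeight_pos c x).le)]
  exact rieszKernel_mul_expWeight_le hc z x

lemma ExpDecay.integrable_rieszKernel_smul {f : E → F} (hf : ExpDecay A c f)
    (hE : 2 < finrank ℝ E) (hc : 0 < c) (hfm : AEStronglyMeasurable f μ) (z : E) :
    Integrable (fun x => rieszKernel (z - x) • f x) μ := by
  have hk : Measurable fun x => rieszKernel (z - x) := measurable_rieszKernel.comp (by fun_prop)
  refine ((integrable_rieszKernel_smul_expWeight hE hc z).const_mul A).mono'
    (hk.aestronglyMeasurable.smul hfm) <| .of_forall fun x => ?_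
  rw [norm_smul, Real.norm_of_nonneg (rieszKernel_nonneg _), smul_eq_mul, mul_left_comm]
  exact mul_le_mul_of_nonneg_left (hf x) (rieszKernel_nonneg _)

lemma ExpDecay.norm_rieszPotential_le {f : E → F} (hf : ExpDecay A c f)
    (hE : 2 < finrank ℝ E) (hc : 0 < c) (z : E) :
    ‖rieszPotential μ f z‖ ≤ A * rieszPotential μ (expWeight c) z := by
  rw [← rieszPotential_const_mul]
  refine norm_rieszPotential_le_of_norm_le ?_ hf
  simpa only [smul_eq_mul, mul_left_comm _ A] using
    (integrable_rieszKernel_smul_expWeight hE hc z).const_mul A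

lemma exists_rieszPotential_expWeight_le (hE : 2 < finrank ℝ E) (hc : 0 < c) :
    ∃ K, ∀ z : E, rieszPotential μ (expWeight c) z ≤ K := by
  refine ⟨(∫ u, (Metric.ball 0 1).indicator rieszKernel u ∂μ) + ∫ x, expWeight c x ∂μ,
    fun z => ?_⟩
  have hint := (integrableOn_rieszKernel_ball (μ := μ) hE 1).integrable_indicator
    measurableSet_ball
  calc rieszPotential μ (expWeight c) z
      ≤ ∫ x, (Metric.ball 0 1).indicator rieszKernel (z - x) + expWeight c x ∂μ :=
        integral_mono (integrable_rieszKernel_smul_expWeight hE hc z)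
          (integrable_rieszKernel_indicator_sub_add_expWeight hE hc z)
          (rieszKernel_mul_expWeight_le hc z)
    _ = _ := by
        rw [integral_add (hint.comp_sub_left z) (integrable_expWeight hc),
          integral_sub_left_eq_self]

lemma exists_one_add_norm_sq_mul_rieszPotential_expWeight_le (hE : 2 < finrank ℝ E) (hc : 0 < c) :
    ∃ K, ∀ z : E, (1 + ‖z‖) ^ 2 * rieszPotential μ (expWeight c) z ≤ K := by
  obtain ⟨M, hM, hMk⟩ := exists_one_add_norm_sq_mul_rieszKernel_mul_expWeight_le (E := E) hc
  have hc₂ : 0 < 2 * c := by positivity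
  obtain ⟨K, hK⟩ := exists_rieszPotential_expWeight_le (E := E) (μ := μ) hE hc₂
  refine ⟨(∫ x, expWeight c x ∂μ) + M * K, fun z => ?_⟩
  have hint : Integrable (fun x => M * (rieszKernel (z - x) * expWeight (2 * c) x)) μ :=
    (integrable_rieszKernel_smul_expWeight hE hc₂ z).const_mul M
  calc (1 + ‖z‖) ^ 2 * rieszPotential μ (expWeight c) z
      = ∫ x, (1 + ‖z‖) ^ 2 * (rieszKernel (z - x) * expWeight c x) ∂μ :=
        (integral_const_mul _ _).symm
    _ ≤ ∫ x, expWeight c x + M * (rieszKernel (z - x) * expWeight (2 * c) x) ∂μ :=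
        integral_mono ((integrable_rieszKernel_smul_expWeight hE hc z).const_mul _)
          ((integrable_expWeight hc).add hint) (hMk z)
    _ = (∫ x, expWeight c x ∂μ) + M * rieszPotential μ (expWeight (2 * c)) z := by
        rw [integral_add (integrable_expWeight hc) hint, integral_const_mul]
        rfl
    _ ≤ _ := by
        gcongr
        exact hK z

/-- `(1 + |z|)⁻²` is square integrable exactly below dimension four, whereas the kernel is locally
integrable only above dimension two. -/
lemma memLp_two_rieszPotential_expWeight (hE : 2 < finrank ℝ E) (hE' : finrank ℝ E < 4)
    (hc : 0 < c) : MemLp (rieszPotential μ (expWeight c : E → ℝ)) 2 μ := by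
  obtain ⟨K, hK⟩ := exists_one_add_norm_sq_mul_rieszPotential_expWeight_le (E := E) (μ := μ) hE hc
  have hdecay : MemLp (fun z : E => ((1 + ‖z‖) ^ 2)⁻¹) 2 μ := by
    have hcont : Continuous fun z : E => ((1 + ‖z‖) ^ 2)⁻¹ :=
      Continuous.inv₀ (by fun_prop) fun z => by positivity
    refine (memLp_two_iff_integrable_sq hcont.aestronglyMeasurable).2 ?_
    have hdim : (finrank ℝ E : ℝ) < (4 : ℕ) := by exact_mod_cast hE'
    refine (integrable_one_add_norm hdim).congr <| .of_forall fun z => ?_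
    simp only [Real.rpow_neg (by positivity : 0 ≤ 1 + ‖z‖), Real.rpow_natCast,
      inv_pow, ← pow_mul]
  refine hdecay.of_le_mul (c := K)
    (aestronglyMeasurable_rieszPotential (continuous_expWeight c).aestronglyMeasurable) <|
    .of_forall fun z => ?_
  rw [Real.norm_of_nonneg (rieszPotential_expWeight_nonneg c z),
    Real.norm_of_nonneg (by positivity), ← div_eq_mul_inv, le_div_iff₀ (by positivity), mul_comm]
  exact hK z

lemma ExpDecay.memLp_two_rieszPotential {f : E → F} (hf : ExpDecay A c f) (hE : 2 < finrank ℝ E)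
    (hE' : finrank ℝ E < 4) (hc : 0 < c) (hfm : AEStronglyMeasurable f μ) :
    MemLp (rieszPotential μ f) 2 μ :=
  (memLp_two_rieszPotential_expWeight hE hE' hc).of_le_mul (c := A)
    (aestronglyMeasurable_rieszPotential hfm) <| .of_forall fun z => by
      rw [Real.norm_of_nonneg (rieszPotential_expWeight_nonneg c z)]
      exact hf.norm_rieszPotential_le hE hc z

lemma rieszPotential_eq_integral_rieszKernel_smul_sub (f : E → F) (z : E) :
    rieszPotential μ f z = ∫ x, rieszKernel x • f (z - x) ∂μ := by
  rw [← integral_sub_left_eq_self _ μ z]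
  simp only [sub_sub_cancel, rieszPotential]

lemma integrable_rieszKernel_mul_expWeight_sub (hE : 2 < finrank ℝ E) (hc : 0 < c) (z : E) :
    Integrable (fun x => rieszKernel x * expWeight c (z - x)) μ := by
  simpa only [sub_sub_cancel, smul_eq_mul] using
    (integrable_rieszKernel_smul_expWeight (μ := μ) hE hc z).comp_sub_left z

/-- After the substitution `x ↦ z - x` the singularity of the kernel no longer moves with `z`, so
that all derivatives fall on `f`. -/
lemma ExpDecay.hasFDerivAt_rieszPotential {f : E → F} (hE : 2 < finrank ℝ E) (hc : 0 < c)
    (hf : ContDiff ℝ 1 f) (h₀ : ExpDecay A c f) (h₁ : ExpDecay B c (fderiv ℝ f)) (z : E) :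
    HasFDerivAt (rieszPotential μ f) (rieszPotential μ (fderiv ℝ f) z) z := by
  have hf' : Continuous (fderiv ℝ f) := hf.continuous_fderiv one_ne_zero
  have hint : Integrable (fun x => rieszKernel x • f (z - x)) μ := by
    simpa only [sub_sub_cancel] using (h₀.integrable_rieszKernel_smul hE hc
      (μ := μ) hf.continuous.aestronglyMeasurable z).comp_sub_left z
  have hbound : ∀ x, ∀ v ∈ Metric.ball z 1, ‖rieszKernel x • fderiv ℝ f (v - x)‖ ≤
      B * Real.exp (1 / c) * (rieszKernel x * expWeight c (z - x)) := fun x v hv => by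
    have hw : expWeight c (v - x) ≤ Real.exp (1 / c) * expWeight c (z - x) := by
      refine (expWeight_le_exp_mul_expWeight hc (v - x) (z - x)).trans ?_
      have hvz : ‖v - x - (z - x)‖ ≤ 1 := by
        simpa using (mem_ball_iff_norm.1 hv).le
      gcongr
      exact (expWeight_pos c _).le
    calc ‖rieszKernel x • fderiv ℝ f (v - x)‖
        = rieszKernel x * ‖fderiv ℝ f (v - x)‖ := by
          rw [norm_smul, Real.norm_of_nonneg (rieszKernel_nonneg x)]
      _ ≤ rieszKernel x * (B * (Real.exp (1 / c) * expWeight c (z - x))) := by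
          gcongr
          · exact rieszKernel_nonneg x
          · exact (h₁ _).trans (mul_le_mul_of_nonneg_left hw h₁.nonneg)
      _ = _ := by ring
  have hderiv : ∀ x, ∀ v ∈ Metric.ball z 1, HasFDerivAt (fun v => rieszKernel x • f (v - x))
      (rieszKernel x • fderiv ℝ f (v - x)) v := fun x v _ =>
    ((hasFDerivAt_comp_sub x).2 (hf.differentiable one_ne_zero (v - x)).hasFDerivAt).const_smul _
  rw [funext (rieszPotential_eq_integral_rieszKernel_smul_sub f),
    rieszPotential_eq_integral_rieszKernel_smul_sub]
  exact hasFDerivAt_integral_of_dominated_of_fderiv_le (Metric.ball_mem_nhds z one_pos)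
    (.of_forall fun v => aestronglyMeasurable_rieszKernel_smul_sub hf.continuous v) hint
    (aestronglyMeasurable_rieszKernel_smul_sub hf' z) (.of_forall hbound)
    ((integrable_rieszKernel_mul_expWeight_sub hE hc z).const_mul _) (.of_forall hderiv)

end RieszPotential

section SquareIntegrable

variable {α F : Type*} [NormedAddCommGroup F]

lemma sqrt_integral_norm_sq_le_of_norm_le [MeasurableSpace α] {μ : Measure α} {f : α → F}
    {g : α → ℝ} {M : ℝ} (hg : MemLp g 2 μ) (hM : 0 ≤ M) (hfg : ∀ᵐ z ∂μ, ‖f z‖ ≤ M * g z) :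
    √(∫ z, ‖f z‖ ^ 2 ∂μ) ≤ M * √(∫ z, g z ^ 2 ∂μ) := by
  have hint : ∫ z, ‖f z‖ ^ 2 ∂μ ≤ M ^ 2 * ∫ z, g z ^ 2 ∂μ := by
    rw [← integral_const_mul]
    refine integral_mono_of_nonneg (.of_forall fun z => sq_nonneg _)
      (hg.integrable_sq.const_mul _) ?_
    filter_upwards [hfg] with z hz
    rw [← mul_pow]
    gcongr
  rw [← Real.sqrt_sq hM, ← Real.sqrt_mul (sq_nonneg M)]
  exact Real.sqrt_le_sqrt hint

lemma sqrt_integral_add_comp_sub_right_sq_le [MeasurableSpace α] [AddGroup α] [MeasurableAdd α]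
    {μ : Measure α} [μ.IsAddRightInvariant] {g : α → ℝ} (hg : MemLp g 2 μ) (y : α) :
    √(∫ z, (g z + g (z - y)) ^ 2 ∂μ) ≤ 2 * √(∫ z, g z ^ 2 ∂μ) := by
  have hτ : Integrable (fun z => g (z - y) ^ 2) μ :=
    (hg.comp_measurePreserving (measurePreserving_sub_right μ y)).integrable_sq
  have hint : ∫ z, (g z + g (z - y)) ^ 2 ∂μ ≤ 2 ^ 2 * ∫ z, g z ^ 2 ∂μ :=
    calc ∫ z, (g z + g (z - y)) ^ 2 ∂μ ≤ ∫ z, 2 * (g z ^ 2 + g (z - y) ^ 2) ∂μ :=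
          integral_mono_of_nonneg (.of_forall fun z => sq_nonneg _)
            ((hg.integrable_sq.add hτ).const_mul 2) (.of_forall fun z => add_sq_le)
      _ = 2 ^ 2 * ∫ z, g z ^ 2 ∂μ := by
          rw [integral_const_mul, integral_add hg.integrable_sq hτ,
            integral_sub_right_eq_self (fun z => g z ^ 2) y]
          ring
  rw [← Real.sqrt_sq zero_le_two, ← Real.sqrt_mul (sq_nonneg 2)]
  exact Real.sqrt_le_sqrt hint

lemma integral_mul_comp_add_right_eq [MeasurableSpace α] [AddGroup α] [MeasurableAdd α]
    {μ : Measure α} [μ.IsAddRightInvariant] {f : α → ℝ} (hf : MemLp f 2 μ) (y : α) :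
    ∫ x, f x * f (x + y) ∂μ =
      (∫ x, f x ^ 2 ∂μ) - 1 / 2 * ∫ x, (f (x + y) - f x) ^ 2 ∂μ := by
  have hτ : MemLp (fun x => f (x + y)) 2 μ :=
    hf.comp_measurePreserving (measurePreserving_add_right μ y)
  have hsq := hf.integrable_sq
  have hτsq : Integrable (fun x => f (x + y) ^ 2) μ := hτ.integrable_sq
  have hinc : Integrable (fun x => (f (x + y) - f x) ^ 2) μ := (hτ.sub hf).integrable_sq
  have hsum : Integrable (fun x => f x ^ 2 + f (x + y) ^ 2) μ := hsq.add hτsq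
  have htrans : ∫ x, f (x + y) ^ 2 ∂μ = ∫ x, f x ^ 2 ∂μ :=
    integral_add_right_eq_self (fun x => f x ^ 2) y
  have hpolar : ∀ x, f x * f (x + y) =
      1 / 2 * (f x ^ 2 + f (x + y) ^ 2 - (f (x + y) - f x) ^ 2) := fun x => by ring
  simp only [hpolar]
  rw [integral_const_mul, integral_sub hsum hinc, integral_add hsq hτsq, htrans]
  ring

end SquareIntegrable

section PekarField

open Module

variable {E : Type*} [NormedAddCommGroup E] [NormedSpace ℝ E] {A c : ℝ} {ψ : E → ℝ}

/-- `ψ` is `C²` and decays exponentially together with its first two derivatives; this is the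
regularity of the Pekar minimizer that the expansions below rely on. -/
structure ExpDecayC2 (A c : ℝ) (ψ : E → ℝ) : Prop where
  contDiff : ContDiff ℝ 2 ψ
  decay : ExpDecay A c ψ
  decay_fderiv : ExpDecay A c (fderiv ℝ ψ)
  decay_fderiv_fderiv : ExpDecay A c (fderiv ℝ (fderiv ℝ ψ))

namespace ExpDecayC2

lemma of_iteratedFDeriv (hψ : ContDiff ℝ 2 ψ)
    (hdecay : ∀ k ≤ 2, ∀ x, ‖iteratedFDeriv ℝ k ψ x‖ ≤ A * Real.exp (-‖x‖ / c)) :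
    ExpDecayC2 A c ψ where
  contDiff := hψ
  decay x := by simpa only [norm_iteratedFDeriv_zero, expWeight] using hdecay 0 zero_le_two x
  decay_fderiv x := by simpa only [norm_iteratedFDeriv_one, expWeight] using hdecay 1 one_le_two x
  decay_fderiv_fderiv x := by
    rw [← norm_iteratedFDeriv_one, norm_iteratedFDeriv_fderiv]
    exact hdecay 2 le_rfl x

lemma differentiable (h : ExpDecayC2 A c ψ) : Differentiable ℝ ψ :=
  h.contDiff.differentiable two_ne_zero

lemma continuous_fderiv (h : ExpDecayC2 A c ψ) : Continuous (fderiv ℝ ψ) :=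
  h.contDiff.continuous_fderiv two_ne_zero

lemma norm_taylor_le (h : ExpDecayC2 A c ψ) (hc : 0 < c) (x y : E) :
    ‖ψ (x + y) - ψ x - fderiv ℝ ψ x y‖ ≤ A * ‖y‖ ^ 2 :=
  norm_add_sub_sub_fderiv_le h.differentiable
    ((h.contDiff.fderiv_right (m := 1) (by norm_num)).differentiable one_ne_zero)
    (h.decay_fderiv_fderiv.norm_le hc) x y

lemma decay_sq (h : ExpDecayC2 A c ψ) (hc : 0 < c) : ExpDecay (A * A) c fun x => ψ x ^ 2 := by
  simpa only [smul_eq_mul, ← sq] using h.decay.smul (h.decay.norm_le hc)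

lemma fderiv_sq (h : ExpDecayC2 A c ψ) :
    fderiv ℝ (fun x => ψ x ^ 2) = fun x => (2 * ψ x) • fderiv ℝ ψ x := by
  ext1 x
  simpa using ((h.differentiable x).hasFDerivAt.pow 2).fderiv

lemma decay_mul_fderiv_apply (h : ExpDecayC2 A c ψ) (hc : 0 < c) (y : E) :
    ExpDecay (2 * A * A * ‖y‖) c fun x => 2 * ψ x * fderiv ℝ ψ x y := by
  simpa [abs_of_pos] using (((h.decay.const_mul 2).smul (h.decay_fderiv.norm_le hc)).clm_apply y)

lemma decay_fderiv_sq (h : ExpDecayC2 A c ψ) (hc : 0 < c) :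
    ExpDecay (2 * A * A) c (fderiv ℝ fun x => ψ x ^ 2) := by
  rw [h.fderiv_sq]
  simpa using (h.decay.const_mul 2).smul (h.decay_fderiv.norm_le hc)

/-- `ψ(x)² - ψ(x-y)² - 2ψ(x)∂_yψ(x)` is `-2ψ(x)` times the Taylor remainder of `ψ` minus the square
of the increment of `ψ`. -/
lemma norm_sq_taylor_le (h : ExpDecayC2 A c ψ) (hc : 0 < c) (x y : E) :
    ‖ψ x ^ 2 - ψ (x - y) ^ 2 - 2 * ψ x * fderiv ℝ ψ x y‖ ≤
      (2 * A ^ 2 + 2 * (A * Real.exp (1 / c)) ^ 2) * ‖y‖ ^ 2 *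
        (expWeight c x + expWeight c (x - y)) := by
  have hrem := h.norm_taylor_le hc x (-y)
  have hinc := h.decay.norm_add_sub_sq_le hc h.differentiable h.decay_fderiv x (-y)
  have hψ := h.decay x
  have hA := h.decay.nonneg
  have hw := expWeight_pos c (x - y)
  rw [← sub_eq_add_neg, norm_neg] at hrem hinc
  calc ‖ψ x ^ 2 - ψ (x - y) ^ 2 - 2 * ψ x * fderiv ℝ ψ x y‖
      = ‖-2 * (ψ x * (ψ (x - y) - ψ x - fderiv ℝ ψ x (-y))) - (ψ (x - y) - ψ x) ^ 2‖ := by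
        rw [map_neg]
        ring_nf
    _ ≤ 2 * (‖ψ x‖ * ‖ψ (x - y) - ψ x - fderiv ℝ ψ x (-y)‖) + ‖ψ (x - y) - ψ x‖ ^ 2 := by
        refine (norm_sub_le _ _).trans_eq ?_
        simp [norm_mul, norm_pow]
    _ ≤ 2 * (A * (expWeight c x + expWeight c (x - y)) * (A * ‖y‖ ^ 2)) +
          2 * (A * Real.exp (1 / c) * ‖y‖) ^ 2 * (expWeight c x + expWeight c (x - y)) := by
        gcongr
        · exact (norm_nonneg _).trans (hψ.trans (by gcongr; linarith))
        · exact hψ.trans (by gcongr; linarith)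
    _ = _ := by ring

end ExpDecayC2

variable [MeasurableSpace E]

/-- The Pekar polarization field `φ` of `ψ`. -/
def pekarField (μ : Measure E) (ψ : E → ℝ) : E → ℝ := rieszPotential μ fun x => ψ x ^ 2

/-- The overlap `H(y)` of `ψ` with its translate by `-y`. -/
def overlap (μ : Measure E) (ψ : E → ℝ) (y : E) : ℝ := ∫ x, ψ x * ψ (x + y) ∂μ

/-- The field `l_y = H(y)φ - (-Δ)^{-1/2}(ψ τ_{-y}ψ)`, which arises from the overlap of `ψ` with its
translate. -/
def overlapField (μ : Measure E) (ψ : E → ℝ) (y z : E) : ℝ :=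
  overlap μ ψ y * pekarField μ ψ z - rieszPotential μ (fun x => ψ x * ψ (x + y)) z

variable [BorelSpace E] [FiniteDimensional ℝ E] {μ : Measure E} [μ.IsAddHaarMeasure]

lemma ExpDecay.memLp_two {f : E → ℝ} (hf : ExpDecay A c f) (hc : 0 < c)
    (hfm : AEStronglyMeasurable f μ) : MemLp f 2 μ := by
  refine (memLp_two_iff_integrable_sq hfm).2 <|
    ((integrable_expWeight hc).const_mul (A ^ 2)).mono' (hfm.pow 2) <| .of_forall fun x => ?_
  calc ‖f x ^ 2‖ = ‖f x‖ ^ 2 := norm_pow _ _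
    _ ≤ (A * expWeight c x) ^ 2 := by
        gcongr
        exact hf x
    _ ≤ A ^ 2 * expWeight c x := by
        rw [mul_pow]
        gcongr
        exact expWeight_sq_le hc x

namespace ExpDecayC2

lemma abs_overlap_sub_one_le (h : ExpDecayC2 A c ψ) (hc : 0 < c) (hψ : ∫ x, ψ x ^ 2 ∂μ = 1)
    (y : E) : |overlap μ ψ y - 1| ≤
      2 * (A * Real.exp (1 / c)) ^ 2 * (∫ x, expWeight c x ∂μ) * ‖y‖ ^ 2 := by
  have hw : Integrable (expWeight c : E → ℝ) μ := integrable_expWeight hc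
  have hnonneg : 0 ≤ ∫ x, (ψ (x + y) - ψ x) ^ 2 ∂μ := integral_nonneg fun x => sq_nonneg _
  have hinc : ∫ x, (ψ (x + y) - ψ x) ^ 2 ∂μ ≤
      4 * (A * Real.exp (1 / c) * ‖y‖) ^ 2 * ∫ x, expWeight c x ∂μ :=
    calc ∫ x, (ψ (x + y) - ψ x) ^ 2 ∂μ
        ≤ ∫ x, 2 * (A * Real.exp (1 / c) * ‖y‖) ^ 2 * (expWeight c x + expWeight c (x + y)) ∂μ := by
          refine integral_mono_of_nonneg (.of_forall fun x => sq_nonneg _)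
            ((hw.add (hw.comp_add_right y)).const_mul _) <| .of_forall fun x => ?_
          simpa using h.decay.norm_add_sub_sq_le hc h.differentiable h.decay_fderiv x y
      _ = _ := by
          rw [integral_const_mul, integral_add hw (hw.comp_add_right y),
            integral_add_right_eq_self (expWeight c) y]
          ring
  rw [overlap, integral_mul_comp_add_right_eq
    (h.decay.memLp_two hc h.contDiff.continuous.aestronglyMeasurable), hψ, abs_le]
  constructor <;> nlinarith

variable (hE : 2 < finrank ℝ E)
include hE

lemma fderiv_pekarField_apply (h : ExpDecayC2 A c ψ) (hc : 0 < c) (z y : E) :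
    fderiv ℝ (pekarField μ ψ) z y =
      rieszPotential μ (fun x => 2 * ψ x * fderiv ℝ ψ x y) z := by
  have hcd : ContDiff ℝ 1 fun x => ψ x ^ 2 := (h.contDiff.of_le (by norm_num)).pow 2
  have hderiv := (h.decay_sq hc).hasFDerivAt_rieszPotential (μ := μ) hE hc hcd
    (h.decay_fderiv_sq hc) z
  rw [pekarField, hderiv.fderiv, rieszPotential_clm_apply ((h.decay_fderiv_sq hc)
    |>.integrable_rieszKernel_smul hE hc
      (hcd.continuous_fderiv one_ne_zero).aestronglyMeasurable z), h.fderiv_sq]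
  rfl

lemma integrable_rieszKernel_smul_sq (h : ExpDecayC2 A c ψ) (hc : 0 < c) (z : E) :
    Integrable (fun x => rieszKernel (z - x) • ψ x ^ 2) μ :=
  (h.decay_sq hc).integrable_rieszKernel_smul hE hc
    (h.contDiff.continuous.pow 2).aestronglyMeasurable z

lemma integrable_rieszKernel_smul_mul_fderiv (h : ExpDecayC2 A c ψ) (hc : 0 < c) (y z : E) :
    Integrable (fun x => rieszKernel (z - x) • (2 * ψ x * fderiv ℝ ψ x y)) μ := by
  have hψ := h.contDiff.continuous
  have hψ' := h.continuous_fderiv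
  exact (h.decay_mul_fderiv_apply hc y).integrable_rieszKernel_smul hE hc
    (Continuous.aestronglyMeasurable (by fun_prop)) z

lemma norm_pekarField_taylor_le (h : ExpDecayC2 A c ψ) (hc : 0 < c) (y z : E) :
    ‖pekarField μ ψ z - pekarField μ ψ (z - y) - fderiv ℝ (pekarField μ ψ) z y‖ ≤
      (2 * A ^ 2 + 2 * (A * Real.exp (1 / c)) ^ 2) * ‖y‖ ^ 2 *
        (rieszPotential μ (expWeight c) z + rieszPotential μ (expWeight c) (z - y)) := by
  have hρ := h.integrable_rieszKernel_smul_sq (μ := μ) hE hc z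
  have hρy : Integrable (fun x => rieszKernel (z - x) • ψ (x - y) ^ 2) μ := by
    simpa only [sub_sub_sub_cancel_right] using
      (h.integrable_rieszKernel_smul_sq (μ := μ) hE hc (z - y)).comp_sub_right y
  have hsub : Integrable (fun x => rieszKernel (z - x) • (ψ x ^ 2 - ψ (x - y) ^ 2)) μ := by
    simp only [smul_sub]
    exact hρ.sub hρy
  have hw := integrable_rieszKernel_smul_expWeight (μ := μ) hE hc z
  have hwy : Integrable (fun x => rieszKernel (z - x) • expWeight c (x - y)) μ := by
    simpa only [sub_sub_sub_cancel_right] using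
      (integrable_rieszKernel_smul_expWeight (μ := μ) hE hc (z - y)).comp_sub_right y
  rw [h.fderiv_pekarField_apply hE hc, pekarField, ← rieszPotential_comp_sub_right _ y z,
    ← rieszPotential_sub hρ hρy,
    ← rieszPotential_sub hsub (h.integrable_rieszKernel_smul_mul_fderiv hE hc y z),
    ← rieszPotential_comp_sub_right _ y z, ← rieszPotential_add hw hwy,
    ← rieszPotential_const_mul]
  refine norm_rieszPotential_le_of_norm_le ?_ (h.norm_sq_taylor_le hc · y)
  simp only [smul_eq_mul, mul_left_comm (rieszKernel _), mul_add (rieszKernel _)]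
  exact (hw.add hwy).const_mul _

/-- Inserting `ψ(x+y) = ψ(x) + ∂_yψ(x) + R(x)`, the first-order term of `l_y` is
`-(-Δ)^{-1/2}(ψ∂_yψ) = -½ ∂_yφ`. -/
lemma overlapField_add_half_fderiv (h : ExpDecayC2 A c ψ) (hc : 0 < c) (y z : E) :
    overlapField μ ψ y z + 1 / 2 * fderiv ℝ (pekarField μ ψ) z y =
      (overlap μ ψ y - 1) * pekarField μ ψ z -
        rieszPotential μ (fun x => ψ x * (ψ (x + y) - ψ x - fderiv ℝ ψ x y)) z := by
  have hψ := h.contDiff.continuous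
  have hψ' := h.continuous_fderiv
  have hρ := h.integrable_rieszKernel_smul_sq (μ := μ) hE hc z
  have hρ' : Integrable
      (fun x => rieszKernel (z - x) • (1 / 2 * (2 * ψ x * fderiv ℝ ψ x y))) μ := by
    simp only [smul_eq_mul, mul_left_comm (rieszKernel _) (1 / 2)]
    exact (h.integrable_rieszKernel_smul_mul_fderiv (μ := μ) hE hc y z).const_mul _
  have hR : Integrable (fun x =>
      rieszKernel (z - x) • (ψ x * (ψ (x + y) - ψ x - fderiv ℝ ψ x y))) μ :=
    (h.decay.smul (h.norm_taylor_le hc · y)).integrable_rieszKernel_smul hE hc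
      (Continuous.aestronglyMeasurable (by simp only [smul_eq_mul]; fun_prop)) z
  have hsum : Integrable (fun x =>
      rieszKernel (z - x) • (ψ x ^ 2 + 1 / 2 * (2 * ψ x * fderiv ℝ ψ x y))) μ := by
    simp only [smul_add]
    exact hρ.add hρ'
  have hexpand : (fun x => ψ x * ψ (x + y)) = fun x =>
      ψ x ^ 2 + 1 / 2 * (2 * ψ x * fderiv ℝ ψ x y) +
        ψ x * (ψ (x + y) - ψ x - fderiv ℝ ψ x y) := by
    ext x
    ring
  rw [overlapField, hexpand, rieszPotential_add hsum hR, rieszPotential_add hρ hρ',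
    rieszPotential_const_mul, h.fderiv_pekarField_apply hE hc, pekarField]
  ring

lemma exists_norm_overlapField_add_half_fderiv_le (h : ExpDecayC2 A c ψ) (hc : 0 < c)
    (hψ : ∫ x, ψ x ^ 2 ∂μ = 1) : ∃ K ≥ 0, ∀ y z : E,
      ‖overlapField μ ψ y z + 1 / 2 * fderiv ℝ (pekarField μ ψ) z y‖ ≤
        K * ‖y‖ ^ 2 * rieszPotential μ (expWeight c) z := by
  set D := 2 * (A * Real.exp (1 / c)) ^ 2 * ∫ x : E, expWeight c x ∂μ
  have hD : 0 ≤ D := by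
    have : 0 ≤ ∫ x : E, expWeight c x ∂μ := integral_nonneg fun x => (expWeight_pos c x).le
    positivity
  refine ⟨D * (A * A) + A * A, by positivity [h.decay.nonneg], fun y z => ?_⟩
  have hφ : ‖pekarField μ ψ z‖ ≤ _ := (h.decay_sq hc).norm_rieszPotential_le hE hc z
  have hR := (h.decay.smul (h.norm_taylor_le hc · y)).norm_rieszPotential_le (μ := μ) hE hc z
  rw [h.overlapField_add_half_fderiv (μ := μ) hE hc]
  calc ‖(overlap μ ψ y - 1) * pekarField μ ψ z -
        rieszPotential μ (fun x => ψ x * (ψ (x + y) - ψ x - fderiv ℝ ψ x y)) z‖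
      ≤ |overlap μ ψ y - 1| * ‖pekarField μ ψ z‖ +
        ‖rieszPotential μ (fun x => ψ x * (ψ (x + y) - ψ x - fderiv ℝ ψ x y)) z‖ := by
        rw [← Real.norm_eq_abs, ← norm_mul]
        exact norm_sub_le _ _
    _ ≤ D * ‖y‖ ^ 2 * (A * A * rieszPotential μ (expWeight c) z) +
        A * (A * ‖y‖ ^ 2) * rieszPotential μ (expWeight c) z :=
        add_le_add (mul_le_mul (h.abs_overlap_sub_one_le hc hψ y) hφ (norm_nonneg _)
          (by positivity)) hR
    _ = _ := by ring

variable (hE' : finrank ℝ E < 4)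
include hE'

lemma memLp_two_fderiv_pekarField_apply (h : ExpDecayC2 A c ψ) (hc : 0 < c) (y : E) :
    MemLp (fun z => fderiv ℝ (pekarField μ ψ) z y) 2 μ := by
  have hψ := h.contDiff.continuous
  have hψ' := h.continuous_fderiv
  rw [funext (h.fderiv_pekarField_apply hE hc · y)]
  exact (h.decay_mul_fderiv_apply hc y).memLp_two_rieszPotential hE hE' hc
    (Continuous.aestronglyMeasurable (by fun_prop))

lemma memLp_two_overlapField (h : ExpDecayC2 A c ψ) (hc : 0 < c) (y : E) :
    MemLp (overlapField μ ψ y) 2 μ := by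
  have hψ := h.contDiff.continuous
  have hφ : MemLp (pekarField μ ψ) 2 μ := (h.decay_sq hc).memLp_two_rieszPotential hE hE' hc
    (hψ.pow 2).aestronglyMeasurable
  have hoverlap : MemLp (rieszPotential μ fun x => ψ x * ψ (x + y)) 2 μ :=
    (h.decay.smul fun x => h.decay.norm_le hc (x + y)).memLp_two_rieszPotential hE hE' hc
      (hψ.mul (hψ.comp (continuous_add_const y))).aestronglyMeasurable
  exact (hφ.const_mul _).sub hoverlap

lemma exists_sqrt_integral_pekarField_taylor_le (h : ExpDecayC2 A c ψ) (hc : 0 < c) :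
    ∃ K ≥ 0, ∀ y : E, √(∫ z, ‖pekarField μ ψ z - pekarField μ ψ (z - y) -
      fderiv ℝ (pekarField μ ψ) z y‖ ^ 2 ∂μ) ≤ K * ‖y‖ ^ 2 := by
  have hV : MemLp (rieszPotential μ (expWeight c : E → ℝ)) 2 μ :=
    memLp_two_rieszPotential_expWeight hE hE' hc
  set S := √(∫ z : E, rieszPotential μ (expWeight c) z ^ 2 ∂μ)
  set M := 2 * A ^ 2 + 2 * (A * Real.exp (1 / c)) ^ 2
  refine ⟨M * (2 * S), by positivity, fun y => ?_⟩
  calc _ ≤ M * ‖y‖ ^ 2 * √(∫ z, (rieszPotential μ (expWeight c) z +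
          rieszPotential μ (expWeight c) (z - y)) ^ 2 ∂μ) :=
        sqrt_integral_norm_sq_le_of_norm_le
          (hV.add (hV.comp_measurePreserving (measurePreserving_sub_right μ y))) (by positivity)
          (.of_forall (h.norm_pekarField_taylor_le hE hc y))
    _ ≤ M * ‖y‖ ^ 2 * (2 * S) := by
        gcongr
        exact sqrt_integral_add_comp_sub_right_sq_le hV y
    _ = _ := by ring

lemma exists_sqrt_integral_overlapField_add_half_fderiv_le (h : ExpDecayC2 A c ψ) (hc : 0 < c)
    (hψ : ∫ x, ψ x ^ 2 ∂μ = 1) : ∃ K ≥ 0, ∀ y : E,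
      √(∫ z, ‖overlapField μ ψ y z + 1 / 2 * fderiv ℝ (pekarField μ ψ) z y‖ ^ 2 ∂μ) ≤
        K * ‖y‖ ^ 2 := by
  obtain ⟨K, hK, hbound⟩ := h.exists_norm_overlapField_add_half_fderiv_le hE hc hψ
  refine ⟨K * √(∫ z : E, rieszPotential μ (expWeight c) z ^ 2 ∂μ), by positivity, fun y => ?_⟩
  rw [mul_right_comm]
  exact sqrt_integral_norm_sq_le_of_norm_le (memLp_two_rieszPotential_expWeight hE hE' hc)
    (by positivity) (.of_forall (hbound y))

end ExpDecayC2

end PekarField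

section OrthogonalDecomposition

variable {α 𝕜 ι : Type*} [RCLike 𝕜] [Fintype ι] [MeasurableSpace α] {μ : Measure α}

lemma integrable_conj_mul {f g : α → 𝕜} (hf : MemLp f 2 μ) (hg : MemLp g 2 μ) :
    Integrable (fun z => conj (f z) * g z) μ :=
  hf.star.integrable_mul hg

lemma integral_norm_add_sq_of_integral_conj_mul_eq_zero {f g : α → 𝕜} (hf : MemLp f 2 μ)
    (hg : MemLp g 2 μ) (horth : ∫ z, conj (f z) * g z ∂μ = 0) :
    ∫ z, ‖f z + g z‖ ^ 2 ∂μ = (∫ z, ‖f z‖ ^ 2 ∂μ) + ∫ z, ‖g z‖ ^ 2 ∂μ := by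
  have hfsq := (memLp_two_iff_integrable_sq_norm hf.1).1 hf
  have hgsq := (memLp_two_iff_integrable_sq_norm hg.1).1 hg
  have hcross : Integrable (fun z => 2 * RCLike.re (conj (f z) * g z)) μ :=
    (integrable_conj_mul hf hg).re.const_mul 2
  have hpolar : ∀ z, ‖f z + g z‖ ^ 2 =
      ‖f z‖ ^ 2 + 2 * RCLike.re (conj (f z) * g z) + ‖g z‖ ^ 2 := fun z => by
    rw [norm_add_sq (𝕜 := 𝕜), RCLike.inner_apply, mul_comm (g z)]
  have hsum : Integrable (fun z => ‖f z‖ ^ 2 + 2 * RCLike.re (conj (f z) * g z)) μ :=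
    hfsq.add hcross
  simp only [hpolar]
  rw [integral_add hsum hgsq, integral_add hfsq hcross, integral_const_mul,
    integral_re (integrable_conj_mul hf hg), horth]
  simp

lemma integral_conj_sum_mul_eq_zero {d : ι → α → 𝕜} {g : α → 𝕜} (hd : ∀ i, MemLp (d i) 2 μ)
    (hg : MemLp g 2 μ) (horth : ∀ i, ∫ z, conj (d i z) * g z ∂μ = 0) (a : ι → 𝕜) :
    ∫ z, conj (∑ i, a i * d i z) * g z ∂μ = 0 := by
  have hsum : ∀ z, conj (∑ i, a i * d i z) * g z =
      ∑ i, conj (a i) * (conj (d i z) * g z) := fun z => by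
    simp only [map_sum, map_mul, Finset.sum_mul, mul_assoc]
  simp only [hsum]
  rw [integral_finsetSum _ fun i _ => (integrable_conj_mul (hd i) hg).const_mul _]
  simp only [integral_const_mul, horth, mul_zero, Finset.sum_const_zero]

/-- `l₀ + ∑ bᵢdᵢ` still lies in the span of the `dᵢ`, so that `(l₀ + ∑ bᵢdᵢ) + l₁` is again an
orthogonal decomposition. -/
lemma integral_norm_add_sum_sq_of_orthogonal_decomposition {d : ι → α → 𝕜} {f l₀ l₁ : α → 𝕜}
    {a : ι → 𝕜} (hd : ∀ i, MemLp (d i) 2 μ) (hf : MemLp f 2 μ)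
    (hl₀ : ∀ᵐ z ∂μ, l₀ z = ∑ i, a i * d i z) (horth : ∀ i, ∫ z, conj (d i z) * l₁ z ∂μ = 0)
    (hdec : ∀ᵐ z ∂μ, f z = l₀ z + l₁ z) (b : ι → 𝕜) :
    ∫ z, ‖f z + ∑ i, b i * d i z‖ ^ 2 ∂μ =
      (∫ z, ‖l₀ z + ∑ i, b i * d i z‖ ^ 2 ∂μ) + ∫ z, ‖l₁ z‖ ^ 2 ∂μ := by
  have hspan : ∀ a : ι → 𝕜, MemLp (fun z => ∑ i, a i * d i z) 2 μ := fun a =>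
    memLp_finsetSum _ fun i _ => (hd i).const_mul _
  have hl₁ : MemLp l₁ 2 μ := by
    refine (hf.sub (hspan a)).ae_eq ?_
    filter_upwards [hl₀, hdec] with z hz hfz
    simp only [Pi.sub_apply, hfz, hz, add_sub_cancel_left]
  have hshift : ∀ᵐ z ∂μ, l₀ z + ∑ i, b i * d i z = ∑ i, (a i + b i) * d i z := by
    filter_upwards [hl₀] with z hz
    simp only [hz, add_mul, Finset.sum_add_distrib]
  calc ∫ z, ‖f z + ∑ i, b i * d i z‖ ^ 2 ∂μ
      = ∫ z, ‖∑ i, (a i + b i) * d i z + l₁ z‖ ^ 2 ∂μ := by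
        refine integral_congr_ae ?_
        filter_upwards [hdec, hshift] with z hfz hz
        rw [hfz, add_right_comm, hz]
    _ = (∫ z, ‖∑ i, (a i + b i) * d i z‖ ^ 2 ∂μ) + ∫ z, ‖l₁ z‖ ^ 2 ∂μ :=
        integral_norm_add_sq_of_integral_conj_mul_eq_zero (hspan _) hl₁
          (integral_conj_sum_mul_eq_zero hd hl₁ horth _)
    _ = _ := by
        congr 1
        refine integral_congr_ae ?_
        filter_upwards [hshift] with z hz
        rw [hz]

lemma sqrt_integral_add_sqrt_integral_le_of_orthogonal_decomposition {d : ι → α → 𝕜}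
    {f l₀ l₁ : α → 𝕜} {a : ι → 𝕜} (hd : ∀ i, MemLp (d i) 2 μ) (hf : MemLp f 2 μ)
    (hl₀ : ∀ᵐ z ∂μ, l₀ z = ∑ i, a i * d i z) (horth : ∀ i, ∫ z, conj (d i z) * l₁ z ∂μ = 0)
    (hdec : ∀ᵐ z ∂μ, f z = l₀ z + l₁ z) (b : ι → 𝕜) :
    √(∫ z, ‖l₁ z‖ ^ 2 ∂μ) + √(∫ z, ‖l₀ z + ∑ i, b i * d i z‖ ^ 2 ∂μ) ≤
      2 * √(∫ z, ‖f z + ∑ i, b i * d i z‖ ^ 2 ∂μ) := by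
  have hnonneg₁ : 0 ≤ ∫ z, ‖l₁ z‖ ^ 2 ∂μ := integral_nonneg fun z => sq_nonneg _
  have hnonneg₀ : 0 ≤ ∫ z, ‖l₀ z + ∑ i, b i * d i z‖ ^ 2 ∂μ := integral_nonneg fun z => sq_nonneg _
  rw [integral_norm_add_sum_sq_of_orthogonal_decomposition hd hf hl₀ horth hdec b, two_mul]
  exact add_le_add (Real.sqrt_le_sqrt (by linarith)) (Real.sqrt_le_sqrt (by linarith))

lemma sqrt_integral_add_sqrt_integral_le_of_orthogonal_decomposition_ofReal {d : ι → α → ℝ}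
    {f : α → ℝ} {l₀ l₁ : α → ℂ} {a : ι → ℂ} (hd : ∀ i, MemLp (d i) 2 μ) (hf : MemLp f 2 μ)
    (hl₀ : ∀ᵐ z ∂μ, l₀ z = ∑ i, a i * (d i z : ℂ))
    (horth : ∀ i, ∫ z, conj (d i z : ℂ) * l₁ z ∂μ = 0)
    (hdec : ∀ᵐ z ∂μ, (f z : ℂ) = l₀ z + l₁ z) (b : ι → ℝ) :
    √(∫ z, ‖l₁ z‖ ^ 2 ∂μ) + √(∫ z, ‖l₀ z + ∑ i, (b i : ℂ) * (d i z : ℂ)‖ ^ 2 ∂μ) ≤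
      2 * √(∫ z, ‖f z + ∑ i, b i * d i z‖ ^ 2 ∂μ) := by
  have hreal : ∀ z, ‖f z + ∑ i, b i * d i z‖ = ‖(f z : ℂ) + ∑ i, (b i : ℂ) * (d i z : ℂ)‖ :=
    fun z => by
      rw [← Complex.norm_real]
      push_cast
      rfl
  simp only [hreal]
  exact sqrt_integral_add_sqrt_integral_le_of_orthogonal_decomposition (fun i => (hd i).ofReal)
    hf.ofReal hl₀ horth hdec fun i => (b i : ℂ)

end OrthogonalDecomposition

lemma sum_mul_apply_euclideanSpace_single {ι : Type*} [Fintype ι] [DecidableEq ι]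
    (L : EuclideanSpace ℝ ι →L[ℝ] ℝ) (y : EuclideanSpace ℝ ι) :
    ∑ i, y i * L (EuclideanSpace.single i 1) = L y := by
  conv_rhs => rw [← (EuclideanSpace.basisFun ι ℝ).sum_repr y]
  simp

theorem statement12_general
    (ψ : EuclideanSpace ℝ (Fin 3) → ℝ) (C₀ : ℝ) (hC₀ : 0 < C₀)
    (hψ : ContDiff ℝ 2 ψ)
    (hnorm : ∫ x, ψ x ^ 2 = 1)
    (hdecay : ∀ k : ℕ, k ≤ 2 → ∀ x,
      ‖iteratedFDeriv ℝ k ψ x‖ ≤ C₀ * Real.exp (-‖x‖ / C₀))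
    (φ : EuclideanSpace ℝ (Fin 3) → ℝ)
    (hφ : ∀ z, φ z = ∫ x, ψ x ^ 2 / (2 * π ^ 2 * ‖z - x‖ ^ 2))
    (H : EuclideanSpace ℝ (Fin 3) → ℝ)
    (hH : ∀ y, H y = ∫ x, ψ x * ψ (x + y))
    (l : EuclideanSpace ℝ (Fin 3) → EuclideanSpace ℝ (Fin 3) → ℝ)
    (hl : ∀ y z, l y z =
      H y * φ z - ∫ x, ψ x * ψ (x + y) / (2 * π ^ 2 * ‖x - z‖ ^ 2))
    (dφ : Fin 3 → EuclideanSpace ℝ (Fin 3) → ℝ)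
    (hdφ : ∀ i z, dφ i z = fderiv ℝ φ z (EuclideanSpace.single i 1))
    (w0 : EuclideanSpace ℝ (Fin 3) → EuclideanSpace ℝ (Fin 3) → ℝ)
    (hw0 : ∀ y z, w0 y z = φ z - φ (z - y)) :
    ∃ C > 0, ∀ y : EuclideanSpace ℝ (Fin 3),
      ∀ l0 l1 : EuclideanSpace ℝ (Fin 3) → ℂ,
        (∃ a : Fin 3 → ℂ, ∀ᵐ z, l0 z = ∑ i, a i * (dφ i z : ℂ)) →
        (∀ i, ∫ z, conj ((dφ i z : ℂ)) * l1 z = 0) →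
        (∀ᵐ z, (l y z : ℂ) = l0 z + l1 z) →
        Real.sqrt (∫ z, (w0 y z - ∑ i, y i * dφ i z) ^ 2) +
          Real.sqrt (∫ z, ‖l1 z‖ ^ 2) +
          Real.sqrt (∫ z, ‖l0 z + (1 / 2) * ∑ i, (y i : ℂ) * (dφ i z : ℂ)‖ ^ 2) ≤
        C * ‖y‖ ^ 2 := by
  have h := ExpDecayC2.of_iteratedFDeriv hψ hdecay
  have hE : 2 < Module.finrank ℝ (EuclideanSpace ℝ (Fin 3)) := by simp
  have hE' : Module.finrank ℝ (EuclideanSpace ℝ (Fin 3)) < 4 := by simp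
  obtain rfl : φ = pekarField volume ψ := funext fun z => by
    rw [hφ, pekarField, rieszPotential_eq_integral_div]
  obtain rfl : l = overlapField volume ψ := funext₂ fun y z => by
    simp only [hl, hH, overlapField, overlap, rieszPotential_eq_integral_div, norm_sub_rev z]
  obtain rfl := funext₂ hdφ
  have hgrad := fun z => sum_mul_apply_euclideanSpace_single (fderiv ℝ (pekarField volume ψ) z)
  obtain ⟨K, hK, hw⟩ := h.exists_sqrt_integral_pekarField_taylor_le (μ := volume) hE hE' hC₀
  obtain ⟨L, hL, hoverlap⟩ :=
    h.exists_sqrt_integral_overlapField_add_half_fderiv_le (μ := volume) hE hE' hC₀ hnorm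
  refine ⟨K + 2 * L + 1, by positivity, fun y l0 l1 ⟨a, ha⟩ horth hdec => ?_⟩
  have hsplit := sqrt_integral_add_sqrt_integral_le_of_orthogonal_decomposition_ofReal
    (fun i => h.memLp_two_fderiv_pekarField_apply hE hE' hC₀ (EuclideanSpace.single i 1))
    (h.memLp_two_overlapField hE hE' hC₀ y) ha horth hdec fun i => 1 / 2 * y i
  push_cast at hsplit
  simp only [mul_assoc, ← Finset.mul_sum, hgrad] at hsplit
  specialize hw y
  simp only [Real.norm_eq_abs, sq_abs] at hw
  simp only [hw0, hgrad]
  linarith [hoverlap y, sq_nonneg ‖y‖]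

/-- In the setting of a smooth, radial, positive, normalized,
exponentially decaying `ψ` with Pekar field `φ`, overlap `H`, `l_y` and
`w_{0,y} = φ − τ_y φ`, writing `l_y = l₀ + l₁` for the (unique a.e.) orthogonal
decomposition in `L²(ℝ³;ℂ)` with `l₀ ∈ span{∂₁φ,∂₂φ,∂₃φ}` and
`l₁ ⊥ span{∂₁φ,∂₂φ,∂₃φ}` (i.e. `l₀ = Π₀ l_y`, `l₁ = Π₁ l_y`), there is `C > 0`
such that for all `y`:
`‖w_{0,y} − (y·∇)φ‖_{L²} + ‖Π₁ l_y‖_{L²} + ‖Π₀ l_y + ½(y·∇)φ‖_{L²} ≤ C|y|²`. -/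
theorem statement12
    (ψ : EuclideanSpace ℝ (Fin 3) → ℝ) (C₀ : ℝ) (hC₀ : 0 < C₀)
    (hsmooth : ContDiff ℝ (⊤ : ℕ∞) ψ)
    (hpos : ∀ x, 0 < ψ x)
    (hradial : ∃ f : ℝ → ℝ, ∀ x, ψ x = f ‖x‖)
    (hnorm : ∫ x, ψ x ^ 2 = 1)
    (hdecay : ∀ k : ℕ, k ≤ 2 → ∀ x,
      ‖iteratedFDeriv ℝ k ψ x‖ ≤ C₀ * Real.exp (-‖x‖ / C₀))
    (φ : EuclideanSpace ℝ (Fin 3) → ℝ)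
    (hφ : ∀ z, φ z = ∫ x, ψ x ^ 2 / (2 * π ^ 2 * ‖z - x‖ ^ 2))
    (H : EuclideanSpace ℝ (Fin 3) → ℝ)
    (hH : ∀ y, H y = ∫ x, ψ x * ψ (x + y))
    (l : EuclideanSpace ℝ (Fin 3) → EuclideanSpace ℝ (Fin 3) → ℝ)
    (hl : ∀ y z, l y z =
      H y * φ z - ∫ x, ψ x * ψ (x + y) / (2 * π ^ 2 * ‖x - z‖ ^ 2))
    (dφ : Fin 3 → EuclideanSpace ℝ (Fin 3) → ℝ)
    (hdφ : ∀ i z, dφ i z = fderiv ℝ φ z (EuclideanSpace.single i 1))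
    (w0 : EuclideanSpace ℝ (Fin 3) → EuclideanSpace ℝ (Fin 3) → ℝ)
    (hw0 : ∀ y z, w0 y z = φ z - φ (z - y)) :
    ∃ C > 0, ∀ y : EuclideanSpace ℝ (Fin 3),
      ∀ l0 l1 : EuclideanSpace ℝ (Fin 3) → ℂ,
        (∃ a : Fin 3 → ℂ, ∀ᵐ z, l0 z = ∑ i, a i * (dφ i z : ℂ)) →
        (∀ i, ∫ z, conj ((dφ i z : ℂ)) * l1 z = 0) →
        (∀ᵐ z, (l y z : ℂ) = l0 z + l1 z) →
        Real.sqrt (∫ z, (w0 y z - ∑ i, y i * dφ i z) ^ 2) +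
          Real.sqrt (∫ z, ‖l1 z‖ ^ 2) +
          Real.sqrt (∫ z, ‖l0 z + (1 / 2) * ∑ i, (y i : ℂ) * (dφ i z : ℂ)‖ ^ 2) ≤
        C * ‖y‖ ^ 2 := by
  exact statement12_general ψ C₀ hC₀ (hsmooth.of_le ENat.LEInfty.out) hnorm hdecay
    φ hφ H hH l hl dφ hdφ w0 hw0
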